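/- arXiv:2108.12507 — 4 statements merged into one kernel-verified Lean document; each statement's English description precedes it below -/
import Mathlib

section
/- The time-integration functional J_α is equivalent to the L² norm on [0,T]: one has exp(−(1/2)·∫₀^T α) · (∫₀^T ρ²)^{1/2} ≤ J_α(ρ) ≤ (∫₀^T ρ²)^{1/2}. In particular J_α(ρ) equals the L²([0,T]) norm of ρ when α ≡ 0. -/
open Set

/-- The time-integration functional `J_α` of the paper, defined with interval
integrals over subintervals of `[0,T]`. -/
noncomputable def Jfun (T : ℝ) (α ρ : ℝ → ℝ) : ℝ :=
  Real.sqrt (Real.exp (-(∫ t in (0:ℝ)..T, α t)) *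
    ∫ t in (0:ℝ)..T,
      ((ρ t) ^ 2 + α t * Real.exp (∫ s in t..T, α s) * ∫ s in (0:ℝ)..t, (ρ s) ^ 2))

/-! Integrating the product `exp (∫_t^T α) · ∫_0^t ρ²` by parts turns the functional into a weighted
`L²` norm, `J_α(ρ)² = ∫_0^T exp (-∫_0^t α) ρ(t)² dt`. Since `α ≥ 0`, the weight lies between
`exp (-∫_0^T α)` and `1`. For merely integrable `α` and `ρ²` the integration by parts rests on the
absolute continuity of primitives. -/

open MeasureTheory

section Composition

variable {X Y F : Type*} [PseudoMetricSpace X] [PseudoMetricSpace Y] [SeminormedAddCommGroup F]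
  {a b : ℝ}

theorem absolutelyContinuousOnInterval_comp_of_lipschitzOnWith {φ : X → Y} {f : ℝ → X} {K : NNReal}
    (hφ : LipschitzOnWith K φ (f '' uIcc a b)) (hf : AbsolutelyContinuousOnInterval f a b) :
    AbsolutelyContinuousOnInterval (fun t ↦ φ (f t)) a b := by
  refine squeeze_zero' (.of_forall fun _ ↦ Finset.sum_nonneg fun _ _ ↦ dist_nonneg) ?_
    (by simpa only [mul_zero] using Filter.Tendsto.const_mul (K : ℝ) hf)
  rw [Filter.eventually_inf_principal]
  refine .of_forall fun E hE ↦ ?_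
  rw [Finset.mul_sum]
  refine Finset.sum_le_sum fun i hi ↦ hφ.dist_le_mul _ ?_ _ ?_
  · exact mem_image_of_mem f (hE.1 i hi).1
  · exact mem_image_of_mem f (hE.1 i hi).2

theorem absolutelyContinuousOnInterval_comp_of_locallyLipschitzOn {φ : F → Y} {f : ℝ → F}
    (hφ : LocallyLipschitzOn (f '' uIcc a b) φ) (hf : AbsolutelyContinuousOnInterval f a b) :
    AbsolutelyContinuousOnInterval (fun t ↦ φ (f t)) a b := by
  have hcompact : IsCompact (f '' uIcc a b) :=
    isCompact_uIcc.image_of_continuousOn hf.continuousOn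
  obtain ⟨K, hK⟩ := hφ.exists_lipschitzOnWith_of_compact hcompact
  exact absolutelyContinuousOnInterval_comp_of_lipschitzOnWith hK hf

end Composition

section ExponentialWeight

variable {α f : ℝ → ℝ} {a b : ℝ}

theorem absolutelyContinuousOnInterval_exp_integral_left (hα : IntervalIntegrable α volume a b) :
    AbsolutelyContinuousOnInterval (fun t ↦ Real.exp (∫ s in t..b, α s)) a b := by
  simp only [intervalIntegral.integral_symm b]
  exact absolutelyContinuousOnInterval_comp_of_locallyLipschitzOn
    (Real.contDiff_exp (n := 1)).locallyLipschitz.locallyLipschitzOn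
    (hα.absolutelyContinuousOnInterval_intervalIntegral right_mem_uIcc).fun_neg

theorem ae_hasDerivAt_exp_integral_left (hα : IntervalIntegrable α volume a b) :
    ∀ᵐ t, t ∈ uIcc a b → HasDerivAt (fun t ↦ Real.exp (∫ s in t..b, α s))
      (-(α t * Real.exp (∫ s in t..b, α s))) t := by
  filter_upwards [hα.ae_hasDerivAt_integral] with t hderiv ht
  simp only [intervalIntegral.integral_symm b]
  convert! (hderiv ht b right_mem_uIcc).fun_neg.exp using 1
  ring

theorem integral_exp_mul_sub_mul_exp_mul_integral (hα : IntervalIntegrable α volume a b)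
    (hf : IntervalIntegrable f volume a b) :
    ∫ t in a..b, (Real.exp (∫ s in t..b, α s) * f t -
      α t * Real.exp (∫ s in t..b, α s) * ∫ s in a..t, f s) = ∫ t in a..b, f t := by
  have hparts := (absolutelyContinuousOnInterval_exp_integral_left hα).integral_deriv_mul_eq_sub
    (hf.absolutelyContinuousOnInterval_intervalIntegral left_mem_uIcc)
  simp only [intervalIntegral.integral_same, Real.exp_zero, one_mul, mul_zero, sub_zero] at hparts
  rw [← hparts]
  refine intervalIntegral.integral_congr_ae ?_
  filter_upwards [ae_hasDerivAt_exp_integral_left hα, hf.ae_hasDerivAt_integral]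
    with t hexp hprim ht
  have ht' := uIoc_subset_uIcc ht
  rw [(hexp ht').deriv, (hprim ht' a left_mem_uIcc).deriv]
  ring

theorem integral_add_mul_exp_mul_integral (hα : IntervalIntegrable α volume a b)
    (hf : IntervalIntegrable f volume a b) :
    ∫ t in a..b, (f t + α t * Real.exp (∫ s in t..b, α s) * ∫ s in a..t, f s) =
      ∫ t in a..b, Real.exp (∫ s in t..b, α s) * f t := by
  have hexp := (absolutelyContinuousOnInterval_exp_integral_left hα).continuousOn
  have hprim := (hf.absolutelyContinuousOnInterval_intervalIntegral left_mem_uIcc).continuousOn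
  have hmemory : IntervalIntegrable
      (fun t ↦ α t * Real.exp (∫ s in t..b, α s) * ∫ s in a..t, f s) volume a b :=
    (hα.mul_continuousOn hexp).mul_continuousOn hprim
  rw [intervalIntegral.integral_add hf hmemory, ← eq_sub_iff_add_eq,
    ← intervalIntegral.integral_sub (hf.continuousOn_mul hexp) hmemory,
    integral_exp_mul_sub_mul_exp_mul_integral hα hf]

theorem exp_neg_integral_mem_Icc (hα : IntervalIntegrable α volume a b)
    (hα_nonneg : 0 ≤ᵐ[volume.restrict (Icc a b)] α) {t : ℝ} (ht : t ∈ Icc a b) :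
    Real.exp (-∫ s in a..t, α s) ∈ Icc (Real.exp (-∫ s in a..b, α s)) 1 := by
  have hα_nonneg_of_subset {u : Set ℝ} (hu : u ⊆ Icc a b) : 0 ≤ᵐ[volume.restrict u] α :=
    ae_restrict_of_ae_restrict_of_subset hu hα_nonneg
  have hmono : ∫ s in a..t, α s ≤ ∫ s in a..b, α s :=
    intervalIntegral.integral_mono_interval le_rfl ht.1 ht.2
      (hα_nonneg_of_subset Ioc_subset_Icc_self) hα
  have hnonneg : 0 ≤ ∫ s in a..t, α s :=
    intervalIntegral.integral_nonneg_of_ae_restrict ht.1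
      (hα_nonneg_of_subset (Icc_subset_Icc_right ht.2))
  exact ⟨Real.exp_le_exp.mpr (neg_le_neg hmono), Real.exp_le_one_iff.mpr (neg_nonpos.mpr hnonneg)⟩

theorem integral_exp_neg_integral_mul_mem_Icc (hab : a ≤ b) (hα : IntervalIntegrable α volume a b)
    (hα_nonneg : 0 ≤ᵐ[volume.restrict (Icc a b)] α) (hf : IntervalIntegrable f volume a b)
    (hf_nonneg : 0 ≤ᵐ[volume.restrict (Icc a b)] f) :
    ∫ t in a..b, Real.exp (-∫ s in a..t, α s) * f t ∈
      Icc (Real.exp (-∫ s in a..b, α s) * ∫ t in a..b, f t) (∫ t in a..b, f t) := by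
  have hweight_cont : ContinuousOn (fun t ↦ Real.exp (-∫ s in a..t, α s)) (uIcc a b) :=
    (hα.absolutelyContinuousOnInterval_intervalIntegral left_mem_uIcc).continuousOn.neg.rexp
  have hweighted := hf.continuousOn_mul hweight_cont
  rw [← intervalIntegral.integral_const_mul]
  constructor
  · refine intervalIntegral.integral_mono_ae_restrict hab (hf.const_mul _) hweighted ?_
    filter_upwards [hf_nonneg, ae_restrict_mem measurableSet_Icc] with t hft ht
    exact mul_le_mul_of_nonneg_right (exp_neg_integral_mem_Icc hα hα_nonneg ht).1 hft
  · refine intervalIntegral.integral_mono_ae_restrict hab hweighted hf ?_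
    filter_upwards [hf_nonneg, ae_restrict_mem measurableSet_Icc] with t hft ht
    exact mul_le_of_le_one_left hft (exp_neg_integral_mem_Icc hα hα_nonneg ht).2

end ExponentialWeight

section Functional

variable {T : ℝ} {α ρ : ℝ → ℝ}

theorem Jfun_eq_sqrt_integral_exp_mul_sq (hα : IntervalIntegrable α volume 0 T)
    (hρ : IntervalIntegrable (fun t ↦ ρ t ^ 2) volume 0 T) :
    Jfun T α ρ = Real.sqrt (∫ t in (0:ℝ)..T, Real.exp (-∫ s in (0:ℝ)..t, α s) * ρ t ^ 2) := by
  rw [Jfun, integral_add_mul_exp_mul_integral hα hρ, ← intervalIntegral.integral_const_mul]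
  congr 1
  refine intervalIntegral.integral_congr fun t ht ↦ ?_
  have hsplit : (∫ s in (0:ℝ)..t, α s) + ∫ s in t..T, α s = ∫ s in (0:ℝ)..T, α s :=
    intervalIntegral.integral_add_adjacent_intervals
      (hα.mono_set (uIcc_subset_uIcc_left ht)) (hα.mono_set (uIcc_subset_uIcc_right ht))
  simp only [← mul_assoc, ← Real.exp_add, ← hsplit, neg_add, neg_add_cancel_right]

theorem Jfun_equiv_L2_general (hT : 0 ≤ T) (hα : IntervalIntegrable α volume 0 T)
    (hα_nonneg : 0 ≤ᵐ[volume.restrict (Icc 0 T)] α)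
    (hρ : IntervalIntegrable (fun t ↦ ρ t ^ 2) volume 0 T) :
    (Real.exp (-(1/2) * ∫ t in (0:ℝ)..T, α t) *
        Real.sqrt (∫ t in (0:ℝ)..T, ρ t ^ 2) ≤ Jfun T α ρ) ∧
    Jfun T α ρ ≤ Real.sqrt (∫ t in (0:ℝ)..T, ρ t ^ 2) ∧
    (α =ᵐ[volume.restrict (Icc 0 T)] 0 →
        Jfun T α ρ = Real.sqrt (∫ t in (0:ℝ)..T, ρ t ^ 2)) := by
  obtain ⟨hlower, hupper⟩ := integral_exp_neg_integral_mul_mem_Icc hT hα hα_nonneg hρ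
    (.of_forall fun t ↦ sq_nonneg (ρ t))
  have lower : Real.exp (-(1/2) * ∫ t in (0:ℝ)..T, α t) *
      Real.sqrt (∫ t in (0:ℝ)..T, ρ t ^ 2) ≤ Jfun T α ρ := by
    rw [Jfun_eq_sqrt_integral_exp_mul_sq hα hρ, neg_mul, one_div_mul_eq_div, ← neg_div,
      Real.exp_half, ← Real.sqrt_mul (Real.exp_nonneg _)]
    exact Real.sqrt_le_sqrt hlower
  have upper : Jfun T α ρ ≤ Real.sqrt (∫ t in (0:ℝ)..T, ρ t ^ 2) := by
    rw [Jfun_eq_sqrt_integral_exp_mul_sq hα hρ]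
    exact Real.sqrt_le_sqrt hupper
  refine ⟨lower, upper, fun hα_zero ↦ le_antisymm upper ?_⟩
  have hintegral_zero : ∫ t in (0:ℝ)..T, α t = 0 :=
    intervalIntegral.integral_zero_ae <| by
      filter_upwards [(ae_restrict_iff' measurableSet_Icc).mp hα_zero] with t h ht
      exact h (Ioc_subset_Icc_self (uIoc_of_le hT ▸ ht))
  simpa only [hintegral_zero, mul_zero, Real.exp_zero, one_mul] using lower

end Functional

/-- `J_α` is equivalent to the `L²` norm on `[0,T]`:
`exp(−(1/2)·∫₀ᵀ α) · (∫₀ᵀ ρ²)^{1/2} ≤ J_α(ρ) ≤ (∫₀ᵀ ρ²)^{1/2}`;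
in particular `J_α(ρ)` equals the `L²([0,T])` norm of `ρ` when `α ≡ 0` on `[0,T]`. -/
theorem Jfun_equiv_L2 (T : ℝ) (hT : 0 < T) (α ρ : ℝ → ℝ)
    (hα_cont : ContinuousOn α (Icc 0 T))
    (hα_nonneg : ∀ t ∈ Icc (0:ℝ) T, 0 ≤ α t)
    (hρ_cont : ContinuousOn ρ (Icc 0 T)) :
    (Real.exp (-(1/2) * ∫ t in (0:ℝ)..T, α t) *
        Real.sqrt (∫ t in (0:ℝ)..T, (ρ t) ^ 2) ≤ Jfun T α ρ) ∧
    (Jfun T α ρ ≤ Real.sqrt (∫ t in (0:ℝ)..T, (ρ t) ^ 2)) ∧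
    ((∀ t ∈ Icc (0:ℝ) T, α t = 0) →
        Jfun T α ρ = Real.sqrt (∫ t in (0:ℝ)..T, (ρ t) ^ 2)) := by
  obtain ⟨lower, upper, eq_of_zero⟩ := Jfun_equiv_L2_general hT.le
    (hα_cont.intervalIntegrable_of_Icc hT.le)
    (ae_restrict_of_forall_mem measurableSet_Icc hα_nonneg)
    ((hρ_cont.pow 2).intervalIntegrable_of_Icc hT.le)
  exact ⟨lower, upper, fun hα_zero ↦
    eq_of_zero (ae_restrict_of_forall_mem measurableSet_Icc hα_zero)⟩
end

section
/- Integral form of the Gronwall lemma: if u(t) ≤ α(t) + ∫₀^t β·u for every t ∈ [0,T], then u(t) ≤ α(t) + ∫₀^t β(ρ)·α(ρ)·exp(∫_ρ^t β) dρ for every t ∈ [0,T]. -/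
open Set

/-!
Multiplying a linear differential inequality `V' ≤ β V + f` by the integrating factor
`s ↦ exp (∫ r in s..b, β r)` cancels the term `β V`, so the derivative of the product is at most
`f s * exp (∫ r in s..b, β r)`, and it remains to integrate. Grönwall's inequality is the case
`V t = ∫ s in a..t, β s * u s`: since `0 ≤ β`, the integral inequality for `u` gives
`V' = β u ≤ β V + β α`. As `V` and the integrating factor are absolutely continuous, all of this
makes sense almost everywhere for merely integrable coefficients.
-/

open MeasureTheory
open scoped NNReal

section Composition

variable {Y : Type*} [PseudoMetricSpace Y] {a b : ℝ}

theorem absolutelyContinuousOnInterval_comp_of_lipschitzOnWith_s9 {X : Type*} [PseudoMetricSpace X]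
    {g : X → Y} {f : ℝ → X} {K : ℝ≥0} {s : Set X} (hg : LipschitzOnWith K g s)
    (hf : AbsolutelyContinuousOnInterval f a b) (hs : MapsTo f (uIcc a b) s) :
    AbsolutelyContinuousOnInterval (g ∘ f) a b := by
  refine squeeze_zero' (.of_forall fun _ ↦ Finset.sum_nonneg fun _ _ ↦ dist_nonneg) ?_
    (by simpa only [mul_zero] using Filter.Tendsto.const_mul (K : ℝ) hf)
  refine Filter.eventually_inf_principal.2 (.of_forall fun E hE ↦ ?_)
  rw [Finset.mul_sum]
  exact Finset.sum_le_sum fun i hi ↦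
    hg.dist_le_mul _ (hs (hE.1 i hi).1) _ (hs (hE.1 i hi).2)

theorem absolutelyContinuousOnInterval_comp_of_locallyLipschitz {X : Type*}
    [SeminormedAddCommGroup X] {g : X → Y} {f : ℝ → X} (hg : LocallyLipschitz g)
    (hf : AbsolutelyContinuousOnInterval f a b) : AbsolutelyContinuousOnInterval (g ∘ f) a b := by
  have hcompact : IsCompact (f '' uIcc a b) := isCompact_uIcc.image_of_continuousOn hf.continuousOn
  obtain ⟨K, hK⟩ := hg.locallyLipschitzOn.exists_lipschitzOnWith_of_compact hcompact
  exact absolutelyContinuousOnInterval_comp_of_lipschitzOnWith_s9 hK hf (mapsTo_image f _)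

end Composition

section IntegratingFactor

variable {β : ℝ → ℝ} {a b : ℝ}

theorem absolutelyContinuousOnInterval_exp_integral (hβ : IntervalIntegrable β volume a b) :
    AbsolutelyContinuousOnInterval (fun s ↦ Real.exp (∫ r in s..b, β r)) a b := by
  have hintegral : AbsolutelyContinuousOnInterval (fun s ↦ ∫ r in s..b, β r) a b := by
    simpa only [intervalIntegral.integral_symm b] using
      (hβ.absolutelyContinuousOnInterval_intervalIntegral right_mem_uIcc).fun_neg
  exact absolutelyContinuousOnInterval_comp_of_locallyLipschitz (g := Real.exp)
    Real.contDiff_exp.locallyLipschitz hintegral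

theorem ae_hasDerivAt_exp_integral (hβ : IntervalIntegrable β volume a b) :
    ∀ᵐ s, s ∈ uIcc a b → HasDerivAt (fun s ↦ Real.exp (∫ r in s..b, β r))
      (Real.exp (∫ r in s..b, β r) * -β s) s := by
  filter_upwards [hβ.ae_hasDerivAt_integral] with s hs hsab
  simpa only [intervalIntegral.integral_symm b] using
    (hs hsab b right_mem_uIcc).fun_neg.exp

end IntegratingFactor

section Gronwall

variable {u α β : ℝ → ℝ} {a b : ℝ}

theorem le_mul_exp_add_integral_of_ae_deriv_le {V f : ℝ → ℝ} (hab : a ≤ b)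
    (hV : AbsolutelyContinuousOnInterval V a b) (hβ : IntervalIntegrable β volume a b)
    (hf : IntervalIntegrable f volume a b)
    (hderiv : ∀ᵐ s, s ∈ Icc a b → deriv V s ≤ β s * V s + f s) :
    V b ≤ V a * Real.exp (∫ r in a..b, β r) +
      ∫ s in a..b, f s * Real.exp (∫ r in s..b, β r) := by
  set E : ℝ → ℝ := fun s ↦ Real.exp (∫ r in s..b, β r)
  have hE : AbsolutelyContinuousOnInterval E a b := absolutelyContinuousOnInterval_exp_integral hβ
  have hE_end : E b = 1 := by simp [E]
  have hproduct : ∀ᵐ s, s ∈ Icc a b → deriv V s * E s + V s * deriv E s ≤ f s * E s := by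
    filter_upwards [hderiv, ae_hasDerivAt_exp_integral hβ] with s hVs hEs hs
    rw [(hEs (Icc_subset_uIcc hs)).deriv]
    calc
      deriv V s * E s + V s * (E s * -β s) = (deriv V s - β s * V s) * E s := by ring
      _ ≤ f s * E s :=
        mul_le_mul_of_nonneg_right (sub_le_iff_le_add'.2 (hVs hs)) (Real.exp_pos _).le
  have hbound : V b * E b - V a * E a ≤ ∫ s in a..b, f s * E s := by
    rw [← hV.integral_deriv_mul_eq_sub hE]
    refine intervalIntegral.integral_mono_ae_restrict hab ?_ (hf.mul_continuousOn hE.continuousOn)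
      ((ae_restrict_iff' measurableSet_Icc).2 hproduct)
    exact (hV.intervalIntegrable_deriv.mul_continuousOn hE.continuousOn).add
      (hE.intervalIntegrable_deriv.continuousOn_mul hV.continuousOn)
  rw [hE_end, mul_one] at hbound
  exact sub_le_iff_le_add'.1 hbound

theorem integral_mul_le_of_ae_le_add_integral (hab : a ≤ b)
    (hβ : IntervalIntegrable β volume a b)
    (hβα : IntervalIntegrable (fun s ↦ β s * α s) volume a b)
    (hβu : IntervalIntegrable (fun s ↦ β s * u s) volume a b)
    (hβ_nonneg : ∀ᵐ s, s ∈ Icc a b → 0 ≤ β s)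
    (hu : ∀ᵐ t, t ∈ Icc a b → u t ≤ α t + ∫ s in a..t, β s * u s) :
    ∫ s in a..b, β s * u s ≤ ∫ s in a..b, β s * α s * Real.exp (∫ r in s..b, β r) := by
  set V : ℝ → ℝ := fun t ↦ ∫ s in a..t, β s * u s
  have hV : AbsolutelyContinuousOnInterval V a b :=
    hβu.absolutelyContinuousOnInterval_intervalIntegral left_mem_uIcc
  have hderiv : ∀ᵐ s, s ∈ Icc a b → deriv V s ≤ β s * V s + β s * α s := by
    filter_upwards [hβu.ae_hasDerivAt_integral, hβ_nonneg, hu] with s hVs hβs hus hs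
    calc
      deriv V s = β s * u s := (hVs (Icc_subset_uIcc hs) a left_mem_uIcc).deriv
      _ ≤ β s * (α s + V s) := mul_le_mul_of_nonneg_left (hus hs) (hβs hs)
      _ = β s * V s + β s * α s := by ring
  simpa [V] using le_mul_exp_add_integral_of_ae_deriv_le hab hV hβ hβα hderiv

theorem gronwall_integral_form_general (hβ : IntervalIntegrable β volume a b)
    (hβα : IntervalIntegrable (fun s ↦ β s * α s) volume a b)
    (hβu : IntervalIntegrable (fun s ↦ β s * u s) volume a b)
    (hβ_nonneg : ∀ᵐ s, s ∈ Icc a b → 0 ≤ β s)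
    (hu : ∀ t ∈ Icc a b, u t ≤ α t + ∫ s in a..t, β s * u s) :
    ∀ t ∈ Icc a b, u t ≤ α t + ∫ s in a..t, β s * α s * Real.exp (∫ r in s..t, β r) := by
  intro t ht
  have hIcc : Icc a t ⊆ Icc a b := Icc_subset_Icc_right ht.2
  have huIcc : uIcc a t ⊆ uIcc a b := uIcc_subset_uIcc_left (Icc_subset_uIcc ht)
  calc
    u t ≤ α t + ∫ s in a..t, β s * u s := hu t ht
    _ ≤ α t + ∫ s in a..t, β s * α s * Real.exp (∫ r in s..t, β r) := by
      gcongr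
      exact integral_mul_le_of_ae_le_add_integral ht.1 (hβ.mono_set huIcc) (hβα.mono_set huIcc)
        (hβu.mono_set huIcc) (hβ_nonneg.mono fun s hs hst ↦ hs (hIcc hst))
        (.of_forall fun s hs ↦ hu s (hIcc hs))

end Gronwall

/-- Integral form of the Gronwall lemma: if
`u t ≤ α t + ∫₀ᵗ β·u` for every `t ∈ [0,T]`, then
`u t ≤ α t + ∫₀ᵗ β(ρ)·α(ρ)·exp(∫_ρᵗ β) dρ` for every `t ∈ [0,T]`. -/
theorem gronwall_integral_form
    (T : ℝ) (hT : 0 < T) (u α β : ℝ → ℝ)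
    (hu_cont : ContinuousOn u (Icc 0 T))
    (hα_cont : ContinuousOn α (Icc 0 T))
    (hβ_cont : ContinuousOn β (Icc 0 T))
    (hβ_nonneg : ∀ t ∈ Icc (0:ℝ) T, 0 ≤ β t)
    (h : ∀ t ∈ Icc (0:ℝ) T, u t ≤ α t + ∫ s in (0:ℝ)..t, β s * u s) :
    ∀ t ∈ Icc (0:ℝ) T,
      u t ≤ α t + ∫ ρ in (0:ℝ)..t, β ρ * α ρ * Real.exp (∫ r in ρ..t, β r) :=
  gronwall_integral_form_general (hβ_cont.intervalIntegrable_of_Icc hT.le)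
    ((hβ_cont.mul hα_cont).intervalIntegrable_of_Icc hT.le)
    ((hβ_cont.mul hu_cont).intervalIntegrable_of_Icc hT.le) (.of_forall hβ_nonneg) h
end

section
/- The van Genuchten relative permeability satisfies the requirements of assumption (P1): the function κ(s) = √s · (1 − (1 − s^(1/λ))^λ)² is strictly increasing on [0,1], with κ(0) = 0, κ(1) = 1, and 0 < κ(s) < 1 for every s ∈ (0,1). -/
/-!
The functions that increase strictly on `[0,1]` and fix `0` and `1` contain the positive powers and
are stable under composition, products, and conjugation by `x ↦ 1 - x`. The relative permeability
is built from powers by these operations: `s ↦ 1 - (1 - s ^ (1 / λ)) ^ λ` is the conjugate of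
`x ↦ x ^ λ` composed with `s ↦ s ^ (1 / λ)`.
-/

open Set

/-- A strict distortion function, in the sense of distortion risk measures: a strictly increasing
function on `[0,1]` fixing both endpoints. It is encoded as a total function on `ℝ` whose values
outside `[0,1]` are unconstrained. -/
structure IsStrictDistortion (f : ℝ → ℝ) : Prop where
  strictMonoOn : StrictMonoOn f (Icc 0 1)
  map_zero : f 0 = 0
  map_one : f 1 = 1

namespace IsStrictDistortion

variable {f g : ℝ → ℝ}

theorem mapsTo_Icc (hf : IsStrictDistortion f) : MapsTo f (Icc 0 1) (Icc 0 1) := by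
  simpa only [hf.map_zero, hf.map_one] using hf.strictMonoOn.monotoneOn.mapsTo_Icc

theorem mapsTo_Ioo (hf : IsStrictDistortion f) : MapsTo f (Ioo 0 1) (Ioo 0 1) := by
  simpa only [hf.map_zero, hf.map_one] using hf.strictMonoOn.mapsTo_Ioo

theorem rpow {p : ℝ} (hp : 0 < p) : IsStrictDistortion fun x ↦ x ^ p where
  strictMonoOn := (Real.strictMonoOn_rpow_Ici_of_exponent_pos hp).mono Icc_subset_Ici_self
  map_zero := Real.zero_rpow hp.ne'
  map_one := Real.one_rpow p

theorem comp (hg : IsStrictDistortion g) (hf : IsStrictDistortion f) :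
    IsStrictDistortion (g ∘ f) where
  strictMonoOn := hg.strictMonoOn.comp hf.strictMonoOn hf.mapsTo_Icc
  map_zero := by simp only [Function.comp_apply, hf.map_zero, hg.map_zero]
  map_one := by simp only [Function.comp_apply, hf.map_one, hg.map_one]

theorem mul (hf : IsStrictDistortion f) (hg : IsStrictDistortion g) :
    IsStrictDistortion fun x ↦ f x * g x where
  strictMonoOn _ hx _ hy hxy :=
    mul_lt_mul'' (hf.strictMonoOn hx hy hxy) (hg.strictMonoOn hx hy hxy)
      (hf.mapsTo_Icc hx).1 (hg.mapsTo_Icc hx).1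
  map_zero := by simp only [hf.map_zero, zero_mul]
  map_one := by simp only [hf.map_one, hg.map_one, mul_one]

theorem pow (hf : IsStrictDistortion f) {n : ℕ} (hn : n ≠ 0) :
    IsStrictDistortion fun x ↦ f x ^ n where
  strictMonoOn _ hx _ hy hxy :=
    pow_lt_pow_left₀ (hf.strictMonoOn hx hy hxy) (hf.mapsTo_Icc hx).1 hn
  map_zero := by simp only [hf.map_zero, zero_pow hn]
  map_one := by simp only [hf.map_one, one_pow]

theorem dual (hf : IsStrictDistortion f) : IsStrictDistortion fun x ↦ 1 - f (1 - x) where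
  strictMonoOn _ hx _ hy hxy :=
    sub_lt_sub_left (hf.strictMonoOn (Icc.one_sub_mem hy) (Icc.one_sub_mem hx)
      (sub_lt_sub_left hxy 1)) 1
  map_zero := by simp only [sub_zero, hf.map_one, sub_self]
  map_one := by simp only [sub_self, hf.map_zero, sub_zero]

end IsStrictDistortion

theorem vanGenuchten_kappa_P1_general {r p q : ℝ} (hr : 0 < r) (hp : 0 < p) (hq : 0 < q)
    {n : ℕ} (hn : n ≠ 0) (κ : ℝ → ℝ) (hκ : ∀ s, κ s = s ^ r * (1 - (1 - s ^ p) ^ q) ^ n) :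
    StrictMonoOn κ (Icc 0 1) ∧ κ 0 = 0 ∧ κ 1 = 1 ∧ ∀ s ∈ Ioo 0 1, 0 < κ s ∧ κ s < 1 := by
  have hdist : IsStrictDistortion κ := by
    rw [funext hκ]
    exact (IsStrictDistortion.rpow hr).mul
      (((IsStrictDistortion.rpow hq).dual.comp (.rpow hp)).pow hn)
  exact ⟨hdist.strictMonoOn, hdist.map_zero, hdist.map_one, hdist.mapsTo_Ioo⟩

/-- The van Genuchten relative permeability
`κ s = √s · (1 − (1 − s^(1/λ))^λ)²` (rpow powers) satisfies the requirements of (P1):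
it is strictly increasing on `[0,1]`, `κ 0 = 0`, `κ 1 = 1`, and `0 < κ s < 1`
for every `s ∈ (0,1)`. -/
theorem vanGenuchten_kappa_P1 (lam : ℝ) (hlam : lam ∈ Ioo (0:ℝ) 1)
    (κ : ℝ → ℝ)
    (hκ : ∀ s : ℝ, κ s = Real.sqrt s * (1 - (1 - s ^ (1 / lam)) ^ lam) ^ 2) :
    StrictMonoOn κ (Icc (0:ℝ) 1) ∧ κ 0 = 0 ∧ κ 1 = 1 ∧
    ∀ s ∈ Ioo (0:ℝ) 1, 0 < κ s ∧ κ s < 1 := by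
  simp only [Real.sqrt_eq_rpow] at hκ
  exact vanGenuchten_kappa_P1_general one_half_pos (one_div_pos.2 hlam.1) hlam.1 two_ne_zero κ hκ
end

section
/- The Brooks–Corey saturation function satisfies assumption (P2): S is Lipschitz continuous on ℝ with Lipschitz constant λ/p_M; S is strictly increasing on (−∞, p_M] with S(p_M) = 1 and 0 < S(p) < 1 for every p < p_M; and S(p) → 0 as p → −∞. -/
open Set Filter

/-!
The saturation function is the composition of the affine function `p ↦ 2 - p / p_M`, truncated
below at `1`, with the power `x ↦ x ^ (-λ)`. The truncation is `1 / p_M`-Lipschitz, and on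
`[1, ∞)` the power is `λ`-Lipschitz because its derivative is bounded by `λ` there.
-/

lemma abs_rpow_sub_rpow_le_of_le {a r x y : ℝ} (ha : 0 < a) (hr : r ≤ 1) (hx : a ≤ x)
    (hy : a ≤ y) : |x ^ r - y ^ r| ≤ |r| * a ^ (r - 1) * |x - y| := by
  have has_deriv : ∀ z ∈ Ici a, HasDerivWithinAt (fun t : ℝ ↦ t ^ r) (r * z ^ (r - 1)) (Ici a) z :=
    fun z hz ↦ (Real.hasDerivAt_rpow_const (Or.inl (ha.trans_le hz).ne')).hasDerivWithinAt
  have deriv_bound : ∀ z ∈ Ici a, ‖r * z ^ (r - 1)‖ ≤ |r| * a ^ (r - 1) := by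
    intro z hz
    rw [norm_mul, Real.norm_eq_abs, Real.norm_of_nonneg (Real.rpow_nonneg (ha.trans_le hz).le _)]
    exact mul_le_mul_of_nonneg_left
      (Real.rpow_le_rpow_of_nonpos ha hz (sub_nonpos.mpr hr)) (abs_nonneg r)
  exact (convex_Ici a).norm_image_sub_le_of_norm_hasDerivWithin_le has_deriv deriv_bound hy hx

/-- The Brooks–Corey saturation at pressure `p`, with parameters `lam` and `pM`. For `0 < pM` the
truncation at `1` encodes the saturated regime `pM < p`, so that one formula covers both regimes. -/
noncomputable def brooksCoreySaturation (lam pM p : ℝ) : ℝ :=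
  max (2 - p / pM) 1 ^ (-lam)

section BrooksCorey

variable {lam pM p q : ℝ}

lemma brooksCoreySaturation_of_le (hpM : 0 < pM) (hp : p ≤ pM) :
    brooksCoreySaturation lam pM p = (2 - p / pM) ^ (-lam) := by
  have : p / pM ≤ 1 := (div_le_one hpM).mpr hp
  rw [brooksCoreySaturation, max_eq_left (by linarith)]

lemma brooksCoreySaturation_of_ge (hpM : 0 < pM) (hp : pM ≤ p) :
    brooksCoreySaturation lam pM p = 1 := by
  have : 1 ≤ p / pM := (one_le_div hpM).mpr hp
  rw [brooksCoreySaturation, max_eq_right (by linarith), Real.one_rpow]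

lemma brooksCoreySaturation_pos : 0 < brooksCoreySaturation lam pM p :=
  Real.rpow_pos_of_pos (zero_lt_one.trans_le (le_max_right _ _)) _

lemma abs_brooksCoreySaturation_sub_le (hlam : 0 ≤ lam) (hpM : 0 < pM) :
    |brooksCoreySaturation lam pM p - brooksCoreySaturation lam pM q| ≤ lam / pM * |p - q| := by
  calc |brooksCoreySaturation lam pM p - brooksCoreySaturation lam pM q|
      ≤ lam * |max (2 - p / pM) 1 - max (2 - q / pM) 1| := by
        simpa only [brooksCoreySaturation, abs_neg, abs_of_nonneg hlam, Real.one_rpow, mul_one]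
          using abs_rpow_sub_rpow_le_of_le zero_lt_one (by linarith : -lam ≤ 1)
            (le_max_right (2 - p / pM) 1) (le_max_right (2 - q / pM) 1)
    _ ≤ lam * |(2 - p / pM) - (2 - q / pM)| :=
        mul_le_mul_of_nonneg_left (abs_max_sub_max_le_abs _ _ _) hlam
    _ = lam / pM * |p - q| := by
        rw [sub_sub_sub_cancel_left, ← sub_div, abs_div, abs_of_pos hpM, abs_sub_comm]
        ring

lemma strictMonoOn_brooksCoreySaturation (hlam : 0 < lam) (hpM : 0 < pM) :
    StrictMonoOn (brooksCoreySaturation lam pM) (Iic pM) := by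
  intro p hp q hq hpq
  rw [brooksCoreySaturation_of_le hpM hp, brooksCoreySaturation_of_le hpM hq]
  have hq_div : q / pM ≤ 1 := (div_le_one hpM).mpr hq
  have hpq_div : p / pM < q / pM := div_lt_div_of_pos_right hpq hpM
  exact Real.rpow_lt_rpow_of_neg (by linarith) (by linarith) (neg_neg_of_pos hlam)

lemma brooksCoreySaturation_lt_one (hlam : 0 < lam) (hpM : 0 < pM) (hp : p < pM) :
    brooksCoreySaturation lam pM p < 1 :=
  (strictMonoOn_brooksCoreySaturation hlam hpM hp.le self_mem_Iic hp).trans_eq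
    (brooksCoreySaturation_of_ge hpM le_rfl)

lemma tendsto_brooksCoreySaturation_atBot (hlam : 0 < lam) (hpM : 0 < pM) :
    Tendsto (brooksCoreySaturation lam pM) atBot (nhds 0) := by
  have affine_atTop : Tendsto (fun p : ℝ ↦ 2 - p / pM) atBot atTop := by
    simpa only [sub_eq_add_neg, Function.comp_def, id] using
      tendsto_atTop_add_const_left atBot (2 : ℝ)
        (tendsto_neg_atBot_atTop.comp (tendsto_id.atBot_div_const hpM))
  exact (tendsto_rpow_neg_atTop hlam).comp
    (tendsto_atTop_mono (fun _ ↦ le_max_left _ _) affine_atTop)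

end BrooksCorey

/-- The Brooks–Corey saturation function
(`S p = (2 − p/p_M)^(−λ)` for `p ≤ p_M`, `S p = 1` for `p > p_M`; rpow powers)
satisfies (P2): `S` is Lipschitz on ℝ with constant `λ/p_M`; `S` is strictly
increasing on `(−∞, p_M]` with `S p_M = 1` and `0 < S p < 1` for `p < p_M`;
and `S p → 0` as `p → −∞`. -/
theorem brooksCorey_S_P2 (lam pM : ℝ) (hlam : 0 < lam) (hpM : 0 < pM)
    (S : ℝ → ℝ)
    (hS_le : ∀ p ≤ pM, S p = (2 - p / pM) ^ (-lam))
    (hS_gt : ∀ p > pM, S p = 1) :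
    (∀ p q : ℝ, |S p - S q| ≤ lam / pM * |p - q|) ∧
    StrictMonoOn S (Iic pM) ∧
    S pM = 1 ∧
    (∀ p < pM, 0 < S p ∧ S p < 1) ∧
    Tendsto S atBot (nhds 0) := by
  obtain rfl : S = brooksCoreySaturation lam pM := by
    funext p
    rcases le_or_gt p pM with hp | hp
    · rw [hS_le p hp, brooksCoreySaturation_of_le hpM hp]
    · rw [hS_gt p hp, brooksCoreySaturation_of_ge hpM hp.le]
  exact ⟨fun _ _ ↦ abs_brooksCoreySaturation_sub_le hlam.le hpM,
    strictMonoOn_brooksCoreySaturation hlam hpM,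
    brooksCoreySaturation_of_ge hpM le_rfl,
    fun _ hp ↦ ⟨brooksCoreySaturation_pos, brooksCoreySaturation_lt_one hlam hpM hp⟩,
    tendsto_brooksCoreySaturation_atBot hlam hpM⟩
end
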